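/- arXiv:2001.05882 — 7 statements merged into one kernel-verified Lean document; each statement's English description precedes it below -/
import Mathlib

section
/- Let (B,β) be an endo-module over a commutative ring R and let i ∈ ℤ. The surjection B i → B⁽¹⁾ i = range(β i) given by β i carries range(β (i−1)) into range(β⁽¹⁾ (i−1)), hence induces a surjection C i → C⁽¹⁾ i; the kernel of this induced surjection is exactly the image of the differential δ i : A i → C i. Consequently C⁽¹⁾ i ≅ coker(δ i). -/
universe u

structure EndoModule (R : Type u) [CommRing R] where
  B : ℤ → Type u
  [addCommGroup : ∀ i, AddCommGroup (B i)]
  [module : ∀ i, Module R (B i)]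
  β : ∀ i : ℤ, B i →ₗ[R] B (i + 1)

attribute [instance] EndoModule.addCommGroup EndoModule.module

namespace EndoModule

variable {R : Type u} [CommRing R]

/-- The derived endo-module: `B⁽¹⁾ i = range (β i) ⊆ B (i+1)`, with
`β⁽¹⁾ i` the restriction of `β (i+1)`. -/
def derive (E : EndoModule R) : EndoModule R where
  B i := LinearMap.range (E.β i)
  β i := (E.β (i + 1)).restrict fun x _ => LinearMap.mem_range_self _ x

/-- `Ck E i` is the cokernel of `β i`, i.e. the module `C (i+1)` of the paper. -/
abbrev Ck (E : EndoModule R) (i : ℤ) :=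
  E.B (i + 1) ⧸ LinearMap.range (E.β i)

/-- The differential `δ (i+1) : A (i+1) → C (i+1)`. -/
def delta (E : EndoModule R) (i : ℤ) :
    LinearMap.ker (E.β (i + 1)) →ₗ[R] E.Ck i :=
  (LinearMap.range (E.β i)).mkQ ∘ₗ (LinearMap.ker (E.β (i + 1))).subtype

/-- The natural surjection `C (i+1) → C⁽¹⁾ (i+1)` induced by `β (i+1)`. -/
def qmap (E : EndoModule R) (i : ℤ) : E.Ck i →ₗ[R] (derive E).Ck i :=
  Submodule.mapQ _ _ ((E.β (i + 1)).rangeRestrict)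
    (by
      rintro x ⟨y, rfl⟩
      exact ⟨⟨E.β i y, ⟨y, rfl⟩⟩, rfl⟩)


/-- For an endo-module `(B, β)` over a commutative ring `R` and `i ∈ ℤ`,
the surjection `B (i+1) → B⁽¹⁾ (i+1) = range (β (i+1))` given by `β (i+1)` carries
`range (β i)` into `range (β⁽¹⁾ i)` (this is the well-definedness of `qmap`), hence
induces a surjection `C (i+1) → C⁽¹⁾ (i+1)`; its kernel is exactly the image of the
differential `δ (i+1) : A (i+1) → C (i+1)`. Consequently `C⁽¹⁾ (i+1) ≅ coker (δ (i+1))`. -/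
theorem qmap_surjective_ker_eq_range_delta
    {R : Type u} [CommRing R] (E : EndoModule R) (i : ℤ) :
    Function.Surjective (E.qmap i) ∧
    LinearMap.ker (E.qmap i) = LinearMap.range (E.delta i) ∧
    Nonempty ((derive E).Ck i ≃ₗ[R] (E.Ck i ⧸ LinearMap.range (E.delta i))) := by
  have hs : Function.Surjective (E.qmap i) := by
    intro z
    obtain ⟨⟨w, x, rfl⟩, rfl⟩ := Submodule.Quotient.mk_surjective _ z
    exact ⟨Submodule.Quotient.mk x, rfl⟩
  have hk : LinearMap.ker (E.qmap i) = LinearMap.range (E.delta i) := by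
    apply le_antisymm
    · intro z hz
      obtain ⟨x, rfl⟩ := Submodule.Quotient.mk_surjective _ z
      have h1 : (Submodule.Quotient.mk ((E.β (i + 1)).rangeRestrict x) : (derive E).Ck i) = 0 :=
        hz
      obtain ⟨⟨w, y, rfl⟩, hw⟩ := (Submodule.Quotient.mk_eq_zero _).1 h1
      have h2 : E.β (i + 1) (E.β i y) = E.β (i + 1) x := congrArg Subtype.val hw
      refine ⟨⟨x - E.β i y, ?_⟩, ?_⟩
      · rw [LinearMap.mem_ker, map_sub, h2, sub_self]
      · change (Submodule.Quotient.mk (x - E.β i y) : E.Ck i) = Submodule.Quotient.mk x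
        rw [Submodule.Quotient.eq]
        exact ⟨-y, by rw [map_neg]; abel⟩
    · rintro _ ⟨⟨a, ha⟩, rfl⟩
      change (Submodule.Quotient.mk ((E.β (i + 1)).rangeRestrict a) : (derive E).Ck i) = 0
      have h0 : (E.β (i + 1)).rangeRestrict a = 0 := Subtype.ext ha
      exact (congrArg (fun t => (Submodule.Quotient.mk t : (derive E).Ck i)) h0).trans
        (map_zero (Submodule.mkQ _))
  exact ⟨hs, hk, ⟨((Submodule.quotEquivOfEq _ _ hk.symm).trans
    ((E.qmap i).quotKerEquivOfSurjective hs)).symm⟩⟩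

end EndoModule
end

section
/- Let (B,β) be an endo-module over a commutative ring R and let i ∈ ℤ. The canonical surjections ε⁽ˢ⁾ i : C⁽ˢ⁾ i → H_(i/i−1), together with the natural surjections C⁽ˢ⁾ i → C⁽ˢ⁺¹⁾ i as transition maps, induce an isomorphism colim_s C⁽ˢ⁾ i ≅ H_(i/i−1). -/
universe u

namespace EndoModule

variable {R : Type u} [CommRing R]

/-- A cocone over the direct system `⋯ → B i → B (i+1) → ⋯`. -/
def IsCocone (E : EndoModule R) {H : Type u} [AddCommGroup H] [Module R H]
    (h : ∀ i, E.B i →ₗ[R] H) : Prop :=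
  ∀ i x, h (i + 1) (E.β i x) = h i x

/-- `(H, h)` is the colimit `H(B) = colim B i` of the direct system along the maps `β`. -/
def IsColimit (E : EndoModule R) {H : Type u} [AddCommGroup H] [Module R H]
    (h : ∀ i, E.B i →ₗ[R] H) : Prop :=
  IsCocone E h ∧
    ∀ (H' : Type u) [AddCommGroup H'] [Module R H'] (h' : ∀ i, E.B i →ₗ[R] H'),
      IsCocone E h' → ∃! f : H →ₗ[R] H', ∀ i x, f (h i x) = h' i x


/-- The cocone over the derived endo-module induced by a cocone over `E`
(`h⁽¹⁾ i` is `h (i+1)` restricted to `range (β i) ⊆ B (i+1)`). -/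
def deriveCocone (E : EndoModule R) {H : Type u} [AddCommGroup H] [Module R H]
    (h : ∀ i, E.B i →ₗ[R] H) : ∀ i, (derive E).B i →ₗ[R] H :=
  fun i => h (i + 1) ∘ₗ (LinearMap.range (E.β i)).subtype

lemma deriveCocone_isCocone {E : EndoModule R} {H : Type u} [AddCommGroup H] [Module R H]
    {h : ∀ i, E.B i →ₗ[R] H} (hc : IsCocone E h) :
    IsCocone (derive E) (deriveCocone E h) :=
  fun i x => hc (i + 1) x.val

/-- The cocone over the `s`-th derivative induced by a cocone over `E`. -/
def iterCocone {H : Type u} [AddCommGroup H] [Module R H] :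
    (s : ℕ) → (E : EndoModule R) → (h : ∀ i, E.B i →ₗ[R] H) →
      ∀ i, (derive^[s] E).B i →ₗ[R] H
  | 0, _, h => h
  | s + 1, E, h => iterCocone s (derive E) (deriveCocone E h)

lemma iterCocone_isCocone {H : Type u} [AddCommGroup H] [Module R H] :
    ∀ (s : ℕ) (E : EndoModule R) (h : ∀ i, E.B i →ₗ[R] H),
      IsCocone E h → IsCocone (derive^[s] E) (iterCocone s E h)
  | 0, _, _, hc => hc
  | s + 1, E, h, hc => iterCocone_isCocone s (derive E) _ (deriveCocone_isCocone hc)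

lemma range_deriveCocone {E : EndoModule R} {H : Type u} [AddCommGroup H] [Module R H]
    {h : ∀ i, E.B i →ₗ[R] H} (hc : IsCocone E h) (i : ℤ) :
    LinearMap.range (deriveCocone E h i) = LinearMap.range (h i) := by
  apply le_antisymm
  · rintro x ⟨y, rfl⟩
    obtain ⟨z, hz⟩ := y.2
    refine ⟨z, ?_⟩
    show h i z = h (i + 1) y.val
    rw [← hz, hc i z]
  · rintro x ⟨y, rfl⟩
    exact ⟨⟨E.β i y, ⟨y, rfl⟩⟩, hc i y⟩

lemma range_iterCocone {H : Type u} [AddCommGroup H] [Module R H] :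
    ∀ (s : ℕ) (E : EndoModule R) (h : ∀ i, E.B i →ₗ[R] H),
      IsCocone E h → ∀ i, LinearMap.range (iterCocone s E h i) = LinearMap.range (h i)
  | 0, _, _, _, _ => rfl
  | s + 1, E, h, hc, i =>
    (range_iterCocone s (derive E) _ (deriveCocone_isCocone hc) i).trans
      (range_deriveCocone hc i)

lemma iterCocone_comm {H : Type u} [AddCommGroup H] [Module R H] :
    ∀ (s : ℕ) (E : EndoModule R) (h : ∀ i, E.B i →ₗ[R] H),
      IsCocone E h → ∀ (i : ℤ) (x : (derive^[s] E).B i),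
        iterCocone s E h (i + 1) ((derive^[s] E).β i x) = iterCocone s E h i x
  | 0, _, _, hc, i, x => hc i x
  | s + 1, E, h, hc, i, x =>
    iterCocone_comm s (derive E) _ (deriveCocone_isCocone hc) i x

/-- The canonical map `ε⁽ˢ⁾ (i+1) : C⁽ˢ⁾ (i+1) → H / H_(i)` (whose image is
`H_(i+1/i)`), using the identification `H⁽ˢ⁾_(i) = H_(i)` of filtrations. -/
def epsIter (s : ℕ) (E : EndoModule R) {H : Type u} [AddCommGroup H] [Module R H]
    (h : ∀ i, E.B i →ₗ[R] H) (hc : IsCocone E h) (i : ℤ) :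
    (derive^[s] E).Ck i →ₗ[R] H ⧸ LinearMap.range (h i) :=
  Submodule.mapQ _ _ (iterCocone s E h (i + 1))
    (by
      rintro x ⟨y, rfl⟩
      show iterCocone s E h (i + 1) _ ∈ LinearMap.range (h i)
      rw [iterCocone_comm s E h hc i y, ← range_iterCocone s E h hc i]
      exact LinearMap.mem_range_self _ y)

/-- The natural surjection `C⁽ˢ⁾ (i+1) → C⁽ˢ⁺¹⁾ (i+1)`. -/
def qStep : (s : ℕ) → (E : EndoModule R) → (i : ℤ) →
    ((derive^[s] E).Ck i →ₗ[R] (derive^[s + 1] E).Ck i)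
  | 0, E, i => qmap E i
  | s + 1, E, i => qStep s (derive E) i

/-- The composite natural surjection `C (i+1) → C⁽ˢ⁾ (i+1)`. -/
def qIter : (s : ℕ) → (E : EndoModule R) → (i : ℤ) →
    (E.Ck i →ₗ[R] (derive^[s] E).Ck i)
  | 0, _, _ => LinearMap.id
  | s + 1, E, i => qIter s (derive E) i ∘ₗ qmap E i



/-- `x` is killed by `n` successive applications of `β`. -/
def Dies (E : EndoModule R) : (n : ℕ) → (j : ℤ) → E.B j → Prop
  | 0, _, x => x = 0
  | n + 1, j, x => Dies E n (j + 1) (E.β j x)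

lemma dies_derive (E : EndoModule R) : ∀ (n : ℕ) (j : ℤ) (v : (derive E).B j),
    Dies E n (j + 1) v.val → Dies (derive E) n j v
  | 0, _, _, hv => Subtype.ext hv
  | n + 1, j, v, hv => dies_derive E n (j + 1) ((derive E).β j v) hv

lemma qIter_dies : ∀ (n : ℕ) (E : EndoModule R) (i : ℤ) (z : E.B (i + 1)),
    Dies E n (i + 1) z → qIter n E i (Submodule.Quotient.mk z) = 0
  | 0, E, i, z, hz => by
    have hz' : z = 0 := hz
    subst hz'
    exact map_zero _
  | n + 1, E, i, z, hz =>
    qIter_dies n (derive E) i ((E.β (i + 1)).rangeRestrict z)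
      (dies_derive E n (i + 1) _ hz)

lemma ell_qIter {L : Type u} [AddCommGroup L] [Module R L] :
    ∀ (n : ℕ) (E : EndoModule R) (i : ℤ)
    (ℓ : ∀ s : ℕ, (derive^[s] E).Ck i →ₗ[R] L)
    (_ : ∀ (s : ℕ) (c : (derive^[s] E).Ck i), ℓ (s + 1) (qStep s E i c) = ℓ s c)
    (c : E.Ck i), ℓ n (qIter n E i c) = ℓ 0 c
  | 0, _, _, _, _, _ => rfl
  | n + 1, E, i, ℓ, hℓ, c =>
    (ell_qIter n (derive E) i (fun s => ℓ (s + 1)) (fun s c => hℓ (s + 1) c)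
      (qmap E i c)).trans (hℓ 0 c)

lemma qmap_surj (E : EndoModule R) (i : ℤ) : Function.Surjective (qmap E i) := by
  intro c
  obtain ⟨⟨_, x, rfl⟩, rfl⟩ := Submodule.Quotient.mk_surjective _ c
  exact ⟨Submodule.Quotient.mk x, rfl⟩

lemma qIter_surj : ∀ (n : ℕ) (E : EndoModule R) (i : ℤ), Function.Surjective (qIter n E i)
  | 0, _, _ => fun c => ⟨c, rfl⟩
  | n + 1, E, i => (qIter_surj n (derive E) i).comp (qmap_surj E i)

lemma qStep_lift {H : Type u} [AddCommGroup H] [Module R H] :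
    ∀ (s : ℕ) (E : EndoModule R) (h : ∀ i, E.B i →ₗ[R] H), IsCocone E h →
    ∀ (i : ℤ) (x : (derive^[s] E).B (i + 1)),
      ∃ y : (derive^[s + 1] E).B (i + 1),
        qStep s E i (Submodule.Quotient.mk x) = Submodule.Quotient.mk y ∧
        iterCocone (s + 1) E h (i + 1) y = iterCocone s E h (i + 1) x
  | 0, E, _, hc, i, x => ⟨(E.β (i + 1)).rangeRestrict x, rfl, hc (i + 1) x⟩
  | s + 1, E, h, hc, i, x =>
    qStep_lift s (derive E) (deriveCocone E h) (deriveCocone_isCocone hc) i x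

lemma eps_qStep (s : ℕ) (E : EndoModule R) {H : Type u} [AddCommGroup H] [Module R H]
    (h : ∀ i, E.B i →ₗ[R] H) (hc : IsCocone E h) (i : ℤ) (c : (derive^[s] E).Ck i) :
    epsIter (s + 1) E h hc i (qStep s E i c) = epsIter s E h hc i c := by
  obtain ⟨x, rfl⟩ := Submodule.Quotient.mk_surjective _ c
  obtain ⟨y, h1, h2⟩ := qStep_lift s E h hc i x
  rw [h1]
  exact congrArg (Submodule.Quotient.mk (p := LinearMap.range (h i))) h2

lemma eps_mem (s : ℕ) (E : EndoModule R) {H : Type u} [AddCommGroup H] [Module R H]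
    (h : ∀ i, E.B i →ₗ[R] H) (hc : IsCocone E h) (i : ℤ) (c : (derive^[s] E).Ck i) :
    epsIter s E h hc i c ∈
      Submodule.map (LinearMap.range (h i)).mkQ (LinearMap.range (h (i + 1))) := by
  obtain ⟨x, rfl⟩ := Submodule.Quotient.mk_surjective _ c
  refine ⟨iterCocone s E h (i + 1) x, ?_, rfl⟩
  have := range_iterCocone s E h hc (i + 1)
  exact this ▸ LinearMap.mem_range_self (iterCocone s E h (i + 1)) x

open DirectSum in
/-- The shift on the direct sum of the `B i`. -/
noncomputable def shift (E : EndoModule R) : (⨁ i, E.B i) →ₗ[R] (⨁ i, E.B i) :=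
  DirectSum.toModule R ℤ _ fun i => DirectSum.lof R ℤ E.B (i + 1) ∘ₗ E.β i

open DirectSum in
lemma shift_apply (E : EndoModule R) (y : ⨁ i, E.B i) (k : ℤ) :
    shift E y (k + 1) = E.β k (y k) := by
  induction y using DirectSum.induction_on with
  | zero => simp
  | add a b ha hb => simp [ha, hb]
  | of j x =>
    change shift E (DirectSum.lof R ℤ E.B j x) (k + 1) = E.β k (DirectSum.lof R ℤ E.B j x k)
    rw [shift, DirectSum.toModule_lof]
    by_cases hjk : j = k
    · subst hjk
      simp [DirectSum.lof_apply]
    · have h1 : j + 1 ≠ k + 1 := by omega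
      rw [LinearMap.comp_apply, DirectSum.lof_eq_of, DirectSum.lof_eq_of,
        DirectSum.of_eq_of_ne _ _ _ (Ne.symm h1), DirectSum.of_eq_of_ne _ _ _ (Ne.symm hjk), map_zero]

open DirectSum in
lemma dies_of_shift (E : EndoModule R) (j : ℤ) (z : E.B j) (y : ⨁ i, E.B i)
    (hy : y - shift E y = DirectSum.lof R ℤ E.B j z) : ∃ n, Dies E n j z := by
  classical
  have hyk : ∀ k, y (k + 1) = DirectSum.lof R ℤ E.B j z (k + 1) + E.β k (y k) := by
    intro k
    rw [← hy, ← shift_apply, DirectSum.sub_apply]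
    abel
  obtain ⟨N, hN⟩ : ∃ N : ℕ, ∀ k : ℤ, y k ≠ 0 → k.natAbs < N := by
    refine ⟨(DFinsupp.support y).sup Int.natAbs + 1, fun k hk => ?_⟩
    exact Nat.lt_succ_of_le (Finset.le_sup (f := Int.natAbs) (DFinsupp.mem_support_iff.2 hk))
  have hz0 : ∀ k : ℤ, (N : ℤ) ≤ k.natAbs → y k = 0 := by
    intro k hk
    by_contra hne
    have := hN k hne
    omega
  have hlow' : ∀ m : ℕ, ∀ k : ℤ, k = -N - j.natAbs + m → k < j → y k = 0 := by
    intro m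
    induction m with
    | zero => intro k hk _; exact hz0 k (by omega)
    | succ m ih =>
      intro k hk hkj
      obtain ⟨k, rfl⟩ : ∃ k', k = k' + 1 := ⟨k - 1, by omega⟩
      rw [hyk, ih k (by omega) (by omega), map_zero, add_zero, DirectSum.lof_eq_of,
        DirectSum.of_eq_of_ne _ _ _ (by omega)]
  have hlow : ∀ k < j, y k = 0 := by
    intro k hk
    by_cases hkN : -(N : ℤ) - j.natAbs ≤ k
    · exact hlow' (k + N + j.natAbs).toNat k (by omega) hk
    · exact hz0 k (by omega)
  have hyj : y j = z := by
    obtain ⟨k, rfl⟩ : ∃ k', j = k' + 1 := ⟨j - 1, by omega⟩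
    rw [hyk, hlow k (by omega), map_zero, add_zero, DirectSum.lof_apply]
  have hup : ∀ (n : ℕ) (k : ℤ), j ≤ k → y (k + n) = 0 → Dies E n k (y k) := by
    intro n
    induction n with
    | zero =>
      intro k _ h0
      have hk : k + ((0 : ℕ) : ℤ) = k := by simp
      rw [hk] at h0
      exact h0
    | succ n ih =>
      intro k hk h0
      have e1 : k + ((n + 1 : ℕ) : ℤ) = k + 1 + n := by push_cast; ring
      rw [e1] at h0
      have h2 := ih (k + 1) (by omega) h0
      rw [hyk, DirectSum.lof_eq_of, DirectSum.of_eq_of_ne _ _ _ (by omega), zero_add] at h2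
      exact h2
  refine ⟨N + j.natAbs, ?_⟩
  rw [← hyj]
  exact hup _ _ le_rfl (hz0 _ (by omega))

open DirectSum in
lemma dies_of_colimit {E : EndoModule R} {H : Type u} [AddCommGroup H] [Module R H]
    {h : ∀ i, E.B i →ₗ[R] H} (hcol : IsColimit E h) (j : ℤ) (z : E.B j) (hz : h j z = 0) :
    ∃ n, Dies E n j z := by
  let P : Submodule R (⨁ i, E.B i) := LinearMap.range (LinearMap.id - shift E)
  obtain ⟨f, hf, -⟩ := hcol.2 ((⨁ i, E.B i) ⧸ P)
    (fun i => P.mkQ ∘ₗ DirectSum.lof R ℤ E.B i) (by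
      intro i x
      have h1 : shift E (DirectSum.lof R ℤ E.B i x) = DirectSum.lof R ℤ E.B (i + 1) (E.β i x) := by
        rw [shift, DirectSum.toModule_lof]; rfl
      refine Eq.symm ((Submodule.Quotient.eq P).2 ⟨DirectSum.lof R ℤ E.B i x, ?_⟩)
      rw [← h1]; rfl)
  have h2 := hf j z
  rw [hz, map_zero] at h2
  obtain ⟨y, hy⟩ := (Submodule.Quotient.mk_eq_zero P).1 h2.symm
  exact dies_of_shift E j z y hy

/-- The canonical surjections `ε⁽ˢ⁾ (i+1) : C⁽ˢ⁾ (i+1) → H_(i+1/i)`,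
together with the natural surjections `C⁽ˢ⁾ (i+1) → C⁽ˢ⁺¹⁾ (i+1)` as transition maps,
induce an isomorphism `colim_s C⁽ˢ⁾ (i+1) ≅ H_(i+1/i)`, where `H_(i+1/i)` is the image of
`H_(i+1)` in `H/H_(i)`. Here `(L, ℓ)` is any colimit of the sequence of the `C⁽ˢ⁾ (i+1)`. -/
theorem colim_Ck_iso_graded
    {R : Type u} [CommRing R] (E : EndoModule R)
    {H : Type u} [AddCommGroup H] [Module R H]
    (h : ∀ i, E.B i →ₗ[R] H) (hcol : IsColimit E h) (i : ℤ)
    (L : Type u) [AddCommGroup L] [Module R L]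
    (ℓ : ∀ s : ℕ, (derive^[s] E).Ck i →ₗ[R] L)
    (hℓ : ∀ (s : ℕ) (c : (derive^[s] E).Ck i), ℓ (s + 1) (qStep s E i c) = ℓ s c)
    (hL : ∀ (L' : Type u) [AddCommGroup L'] [Module R L']
        (ℓ' : ∀ s : ℕ, (derive^[s] E).Ck i →ₗ[R] L'),
      (∀ (s : ℕ) (c : (derive^[s] E).Ck i), ℓ' (s + 1) (qStep s E i c) = ℓ' s c) →
      ∃! f : L →ₗ[R] L', ∀ s c, f (ℓ s c) = ℓ' s c) :
    ∃ e : L ≃ₗ[R]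
        ↥(Submodule.map (LinearMap.range (h i)).mkQ (LinearMap.range (h (i + 1)))),
      ∀ (s : ℕ) (c : (derive^[s] E).Ck i),
        (e (ℓ s c) : H ⧸ LinearMap.range (h i)) = epsIter s E h hcol.1 i c := by
  have hc := hcol.1
  obtain ⟨f, hf, -⟩ := hL
    ↥(Submodule.map (LinearMap.range (h i)).mkQ (LinearMap.range (h (i + 1))))
    (fun s => (epsIter s E h hc i).codRestrict _ (eps_mem s E h hc i))
    (fun s c => Subtype.ext (eps_qStep s E h hc i c))
  have hsurj : Function.Surjective (ℓ 0) := by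
    obtain ⟨g, -, hg⟩ := hL (L ⧸ LinearMap.range (ℓ 0)) (fun _ => 0) (fun _ _ => rfl)
    have h1 := hg (LinearMap.range (ℓ 0)).mkQ (by
      intro s c
      obtain ⟨c, rfl⟩ := qIter_surj s E i c
      rw [ell_qIter s E i ℓ hℓ c]
      exact (Submodule.Quotient.mk_eq_zero _).2 ⟨c, rfl⟩)
    have h2 := hg 0 (fun _ _ => rfl)
    intro l
    have h3 : (LinearMap.range (ℓ 0)).mkQ l = 0 := by rw [h1, ← h2]; rfl
    exact (Submodule.Quotient.mk_eq_zero _).1 h3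
  have hbij : Function.Bijective f := by
    constructor
    · rw [injective_iff_map_eq_zero]
      intro l hl
      obtain ⟨c, rfl⟩ := hsurj l
      obtain ⟨x, rfl⟩ : ∃ x : E.B (i + 1), (Submodule.Quotient.mk x : E.Ck i) = c :=
        Submodule.Quotient.mk_surjective _ c
      replace hl := (hf 0 (Submodule.Quotient.mk x : E.Ck i)).symm.trans hl
      have h1 := congrArg Subtype.val hl
      obtain ⟨y, hy⟩ := (Submodule.Quotient.mk_eq_zero (LinearMap.range (h i))).1 h1
      have hy' : h i y = h (i + 1) x := hy
      obtain ⟨n, hn⟩ := dies_of_colimit hcol (i + 1) (x - E.β i y) (by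
        rw [map_sub, hc i y, hy']; exact sub_self _)
      have hq : (Submodule.Quotient.mk x : E.Ck i) = Submodule.Quotient.mk (x - E.β i y) := by
        rw [Submodule.Quotient.eq]
        exact ⟨y, by abel⟩
      have h5 := ell_qIter n E i ℓ hℓ (Submodule.Quotient.mk x)
      have h6 : qIter n E i (Submodule.Quotient.mk x) = 0 := by
        rw [hq]
        exact qIter_dies n E i _ hn
      rw [h6, map_zero] at h5
      exact h5.symm
    · rintro ⟨_, _, ⟨x, rfl⟩, rfl⟩
      refine ⟨ℓ 0 (Submodule.Quotient.mk x), ?_⟩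
      rw [hf]
      rfl
  refine ⟨LinearEquiv.ofBijective f hbij, fun s c => ?_⟩
  exact congrArg Subtype.val (hf s c)

end EndoModule
end

section
/- Let (B,β) be an endo-module over a commutative ring R, let d ∈ ℤ, and suppose (B,β) is d-stable. Then for all integers i and s ≥ 0 with i + s ≥ d, the canonical surjection ε⁽ˢ⁾ i : C⁽ˢ⁾ i → H_(i/i−1) is an isomorphism. -/
universe u

namespace EndoModule

variable {R : Type u} [CommRing R]

/-- The transition maps of the direct system. -/
noncomputable def trans (E : EndoModule R) (k : ℤ) (m : ℤ) (hkm : k ≤ m) :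
    E.B k →ₗ[R] E.B m :=
  Int.leInduction (motive := fun m _ => E.B k →ₗ[R] E.B m) LinearMap.id
    (fun n _ f => E.β n ∘ₗ f) m hkm

lemma trans_self (E : EndoModule R) (k : ℤ) : E.trans k k le_rfl = LinearMap.id := by
  unfold trans
  rw [Int.leInduction_base]

lemma trans_succ (E : EndoModule R) (k m : ℤ) (hkm : k ≤ m) :
    E.trans k (m + 1) (by omega) = E.β m ∘ₗ E.trans k m hkm := by
  unfold trans
  rw [Int.leInduction_add_one]

lemma trans_comp (E : EndoModule R) (k m : ℤ) (hkm : k + 1 ≤ m) (x : E.B k) :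
    E.trans (k + 1) m hkm (E.β k x) = E.trans k m (by omega) x := by
  induction m, hkm using Int.leInduction with
  | base =>
    rw [trans_self, trans_succ E k k le_rfl, trans_self]
    rfl
  | succ n hn ih =>
    rw [trans_succ E (k + 1) n hn, trans_succ E k n (by omega)]
    simp [ih]

lemma trans_inj (E : EndoModule R) (d : ℤ)
    (hstab : ∀ i : ℤ, d ≤ i → LinearMap.ker (E.β i) = ⊥) (k m : ℤ) (hd : d ≤ k) (hkm : k ≤ m) :
    Function.Injective (E.trans k m hkm) := by
  induction m, hkm using Int.leInduction with
  | base => rw [trans_self]; exact Function.injective_id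
  | succ n hn ih =>
    rw [trans_succ E k n hn]
    exact (LinearMap.ker_eq_bot.1 (hstab n (by omega))).comp ih

/-- Sequences vanishing eventually. -/
def evZero (E : EndoModule R) : Submodule R (∀ m, E.B m) where
  carrier := {f | ∃ N : ℤ, ∀ m, N ≤ m → f m = 0}
  zero_mem' := ⟨0, fun _ _ => rfl⟩
  add_mem' := by
    rintro f g ⟨N, hN⟩ ⟨M, hM⟩
    refine ⟨max N M, fun m hm => ?_⟩
    simp [hN m (le_trans (le_max_left _ _) hm), hM m (le_trans (le_max_right _ _) hm)]
  smul_mem' := by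
    rintro c f ⟨N, hN⟩
    exact ⟨N, fun m hm => by simp [hN m hm]⟩

/-- The germ cocone. -/
noncomputable def germ (E : EndoModule R) (k : ℤ) : E.B k →ₗ[R] ((∀ m, E.B m) ⧸ E.evZero) :=
  E.evZero.mkQ ∘ₗ LinearMap.pi fun m => if hkm : k ≤ m then E.trans k m hkm else 0

lemma germ_isCocone (E : EndoModule R) : IsCocone E E.germ := by
  intro k x
  refine (Submodule.Quotient.eq _).2 ⟨k + 1, fun m hm => ?_⟩
  have hm' : k ≤ m := by omega
  rw [Pi.sub_apply, LinearMap.pi_apply, LinearMap.pi_apply, dif_pos hm, dif_pos hm', trans_comp,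
    sub_self]

lemma colimit_inj (E : EndoModule R) (d : ℤ)
    (hstab : ∀ i : ℤ, d ≤ i → LinearMap.ker (E.β i) = ⊥)
    {H : Type u} [AddCommGroup H] [Module R H]
    (h : ∀ i, E.B i →ₗ[R] H) (hcol : IsColimit E h) (k : ℤ) (hk : d ≤ k) :
    Function.Injective (h k) := by
  obtain ⟨f, hf, -⟩ := hcol.2 _ E.germ E.germ_isCocone
  rw [injective_iff_map_eq_zero]
  intro x hx
  have h0 : E.germ k x = 0 := by rw [← hf, hx, map_zero]
  obtain ⟨N, hN⟩ := (Submodule.Quotient.mk_eq_zero _).1 h0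
  have h1 := hN (max N k) (le_max_left _ _)
  have h2 : k ≤ max N k := le_max_right _ _
  rw [LinearMap.pi_apply, dif_pos h2] at h1
  exact (injective_iff_map_eq_zero _).1 (E.trans_inj d hstab k _ hk h2) x h1

lemma iterCocone_inj {H : Type u} [AddCommGroup H] [Module R H] :
    ∀ (s : ℕ) (E : EndoModule R) (h : ∀ i, E.B i →ₗ[R] H) (d : ℤ)
      (_ : ∀ k, d ≤ k → Function.Injective (h k)) (k : ℤ) (_ : d ≤ k + s),
      Function.Injective (iterCocone s E h k)
  | 0, _, _, _, hi, k, hk => hi k (by simpa using hk)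
  | s + 1, E, h, d, hi, k, hk =>
    iterCocone_inj s (derive E) (deriveCocone E h) (d - 1)
      (fun j hj => (hi (j + 1) (by omega)).comp Subtype.val_injective) k
      (by push_cast at hk; omega)

/-- Let `(B, β)` be a `d`-stable endo-module over a commutative ring `R`,
and let `(H, h)` be the colimit of the system. Then for all `i` and `s ≥ 0` with
`(i + 1) + s ≥ d`, the canonical surjection `ε⁽ˢ⁾ (i+1) : C⁽ˢ⁾ (i+1) → H_(i+1/i)` is an
isomorphism: it is injective, and its range is the image of `H_(i+1)` in `H/H_(i)`.
(Here `Ck _ i` denotes the cokernel `C (i+1)`, whence the index shift.) -/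
theorem epsIter_bijective_of_stable
    {R : Type u} [CommRing R] (E : EndoModule R) (d : ℤ)
    (hstab : ∀ i : ℤ, d ≤ i → LinearMap.ker (E.β i) = ⊥)
    {H : Type u} [AddCommGroup H] [Module R H]
    (h : ∀ i, E.B i →ₗ[R] H) (hcol : IsColimit E h)
    (i : ℤ) (s : ℕ) (his : d ≤ i + 1 + s) :
    Function.Injective (epsIter s E h hcol.1 i) ∧
    LinearMap.range (epsIter s E h hcol.1 i) =
      Submodule.map (LinearMap.range (h i)).mkQ (LinearMap.range (h (i + 1))) := by
  constructor
  · rw [injective_iff_map_eq_zero]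
    intro x hx
    obtain ⟨x, rfl⟩ := Submodule.Quotient.mk_surjective _ x
    have hx' : iterCocone s E h (i + 1) x ∈ LinearMap.range (h i) :=
      (Submodule.Quotient.mk_eq_zero _).1 hx
    rw [← range_iterCocone s E h hcol.1 i] at hx'
    obtain ⟨y, hy⟩ := hx'
    rw [← iterCocone_comm s E h hcol.1 i y] at hy
    refine (Submodule.Quotient.mk_eq_zero _).2 ⟨y, ?_⟩
    exact iterCocone_inj s E h d (E.colimit_inj d hstab h hcol) (i + 1) his hy
  · rw [← range_iterCocone s E h hcol.1 (i + 1)]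
    ext z
    constructor
    · rintro ⟨x, rfl⟩
      obtain ⟨x, rfl⟩ := Submodule.Quotient.mk_surjective _ x
      exact ⟨_, ⟨x, rfl⟩, rfl⟩
    · rintro ⟨_, ⟨x, rfl⟩, rfl⟩
      exact ⟨Submodule.Quotient.mk x, rfl⟩

end EndoModule
end

section
/- Let (B,β) be an endo-module over a commutative ring R that is stable and bounded below. Then there exists s₀ ≥ 0 such that for every s ≥ s₀ the s-th derivative B⁽ˢ⁾ is degenerate, i.e., all its structure maps β⁽ˢ⁾ i are injective. -/
universe u

namespace EndoModule

variable {R : Type u} [CommRing R]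

/-- Iterated derivatives stay bounded below and become stable one degree earlier each time. -/
theorem iterate_aux (E : EndoModule R) (d n : ℤ)
    (hd : ∀ i : ℤ, d ≤ i → Function.Injective (E.β i))
    (hn : ∀ i : ℤ, i < n → ∀ x : E.B i, x = 0) (s : ℕ) :
    (∀ i : ℤ, d - s ≤ i → Function.Injective ((derive^[s] E).β i)) ∧
      (∀ i : ℤ, i < n → ∀ x : (derive^[s] E).B i, x = 0) := by
  induction s with
  | zero => simpa using ⟨hd, hn⟩
  | succ s ih =>
    rw [Function.iterate_succ_apply']
    generalize derive^[s] E = F at ih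
    obtain ⟨h1, h2⟩ := ih
    constructor
    · intro i hi x y hxy
      apply Subtype.ext
      apply h1 (i + 1) (by push_cast at hi; omega)
      exact congrArg Subtype.val hxy
    · rintro i hi ⟨x, y, rfl⟩
      apply Subtype.ext
      change F.β i y = 0
      rw [h2 i hi y, map_zero]

/-- Let `(B, β)` be an endo-module over a commutative ring `R` which is
stable (i.e. `d`-stable for some `d`: `ker (β i) = 0` for all `i ≥ d`) and bounded below
(i.e. `B i = 0` for all `i` smaller than some `n`). Then there exists `s₀ ≥ 0` such that
for every `s ≥ s₀` the `s`-th derivative `B⁽ˢ⁾` is degenerate, i.e. all its structure maps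
`β⁽ˢ⁾ i` are injective. -/
theorem derive_iterate_degenerate_of_stable_boundedBelow
    {R : Type u} [CommRing R] (E : EndoModule R)
    (hstab : ∃ d : ℤ, ∀ i : ℤ, d ≤ i → LinearMap.ker (E.β i) = ⊥)
    (hbb : ∃ n : ℤ, ∀ i : ℤ, i < n → ∀ x : E.B i, x = 0) :
    ∃ s₀ : ℕ, ∀ s : ℕ, s₀ ≤ s → ∀ i : ℤ, Function.Injective ((derive^[s] E).β i) := by
  obtain ⟨d, hd⟩ := hstab
  obtain ⟨n, hn⟩ := hbb
  refine ⟨(d - n).toNat, fun s hs i => ?_⟩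
  obtain ⟨h1, h2⟩ := iterate_aux E d n (fun i hi => LinearMap.ker_eq_bot.mp (hd i hi)) hn s
  by_cases hi : i < n
  · intro x y _
    rw [h2 i hi x, h2 i hi y]
  · exact h1 i (by omega)

end EndoModule
end

section
/- Let (B,β) be an endo-module over a commutative ring R. If (B,β) is degenerate, then the canonical surjection ε i : C i → H_(i/i−1) is an isomorphism for every i ∈ ℤ. Conversely, if (B,β) is bounded below and ε i is an isomorphism for every i ∈ ℤ, then (B,β) is degenerate. -/
universe u

namespace EndoModule

variable {R : Type u} [CommRing R]

/-- The canonical map `ε (i+1) : C (i+1) → H / H_(i)` (whose image is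
`H_(i+1/i) = H_(i+1)/H_(i)`). -/
def eps (E : EndoModule R) {H : Type u} [AddCommGroup H] [Module R H]
    (h : ∀ i, E.B i →ₗ[R] H) (hc : IsCocone E h) (i : ℤ) :
    E.Ck i →ₗ[R] H ⧸ LinearMap.range (h i) :=
  Submodule.mapQ _ _ (h (i + 1))
    (by
      rintro x ⟨y, rfl⟩
      exact ⟨y, (hc i y).symm⟩)

/-- The canonical map `ε⁽¹⁾ (i+1) : C⁽¹⁾ (i+1) → H / H_(i)`, using the identification
`H⁽¹⁾_(i) = H_(i)` of the filtration of the colimit of the derived endo-module. -/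
def epsD (E : EndoModule R) {H : Type u} [AddCommGroup H] [Module R H]
    (h : ∀ i, E.B i →ₗ[R] H) (hc : IsCocone E h) (i : ℤ) :
    (derive E).Ck i →ₗ[R] H ⧸ LinearMap.range (h i) :=
  Submodule.mapQ _ _ ((h (i + 1 + 1)) ∘ₗ (LinearMap.range (E.β (i + 1))).subtype)
    (by
      rintro x ⟨y, rfl⟩
      obtain ⟨z, hz⟩ := y.2
      refine ⟨z, ?_⟩
      show h i z = h (i + 1 + 1) (E.β (i + 1) y.val)
      rw [hc (i + 1) y.val, ← hz, hc i z])


/-- The shift endomorphism of the direct sum induced by `β`. -/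
noncomputable def shiftMap (E : EndoModule R) :
    DirectSum ℤ E.B →ₗ[R] DirectSum ℤ E.B :=
  DirectSum.toModule R ℤ _ fun i => DirectSum.lof R ℤ E.B (i + 1) ∘ₗ E.β i

theorem shiftMap_lof (E : EndoModule R) (i : ℤ) (x : E.B i) :
    shiftMap E (DirectSum.lof R ℤ E.B i x) = DirectSum.lof R ℤ E.B (i + 1) (E.β i x) := by
  simp [shiftMap]

theorem shiftMap_apply (E : EndoModule R) (y : DirectSum ℤ E.B) (k : ℤ) :
    shiftMap E y (k + 1) = E.β k (y k) := by
  have : DirectSum.component R ℤ E.B (k + 1) ∘ₗ shiftMap E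
      = E.β k ∘ₗ DirectSum.component R ℤ E.B k := by
    apply DirectSum.linearMap_ext
    intro i
    ext x
    simp only [LinearMap.comp_apply, shiftMap_lof]
    by_cases hik : i = k
    · subst hik
      rw [DirectSum.component.lof_self, DirectSum.component.lof_self]
    · rw [DirectSum.component.of, DirectSum.component.of, dif_neg hik, dif_neg (by omega), map_zero]
  exact LinearMap.congr_fun this y

theorem colimit_injective (E : EndoModule R) {H : Type u} [AddCommGroup H] [Module R H]
    (h : ∀ i, E.B i →ₗ[R] H) (hcol : IsColimit E h)
    (hβ : ∀ i : ℤ, Function.Injective (E.β i)) (i : ℤ) : Function.Injective (h i) := by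
  classical
  rw [injective_iff_map_eq_zero]
  intro x hx
  let P : Submodule R (DirectSum ℤ E.B) := LinearMap.range (shiftMap E - LinearMap.id)
  obtain ⟨f, hf, -⟩ := hcol.2 (DirectSum ℤ E.B ⧸ P)
    (fun j => P.mkQ ∘ₗ DirectSum.lof R ℤ E.B j) (by
      intro j z
      simp only [LinearMap.comp_apply, Submodule.mkQ_apply]
      rw [Submodule.Quotient.eq]
      refine ⟨DirectSum.lof R ℤ E.B j z, ?_⟩
      simp [shiftMap_lof])
  have h0 := hf i x
  rw [hx, map_zero] at h0
  have h1 : DirectSum.lof R ℤ E.B i x ∈ P := by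
    rw [← Submodule.Quotient.mk_eq_zero]
    exact h0.symm
  obtain ⟨y, hy⟩ := h1
  have hy' : ∀ k : ℤ, E.β k (y k) - y (k + 1) = DirectSum.lof R ℤ E.B i x (k + 1) := by
    intro k
    rw [← hy, ← shiftMap_apply]
    rfl
  have hne : ∀ k : ℤ, k ≠ i → DirectSum.lof R ℤ E.B i x k = 0 := by
    intro k hk
    exact DirectSum.of_eq_of_ne i k x hk
  -- finite support bounds
  obtain ⟨N, hN⟩ : ∃ N : ℤ, ∀ k, N ≤ |k| → y k = 0 := by
    obtain ⟨M, hM⟩ := ((DFinsupp.support y).image fun k : ℤ => |k|).bddAbove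
    refine ⟨M + 1, fun k hk => ?_⟩
    by_contra hne
    have : |k| ≤ M := hM (by
      simp only [Finset.coe_image, Set.mem_image, Finset.mem_coe]
      exact ⟨k, DFinsupp.mem_support_iff.2 hne, rfl⟩)
    omega
  have hlow : ∀ k : ℤ, k < i → y k = 0 := by
    by_cases hc : i ≤ -|N|
    · intro k hk
      exact hN k (by have := neg_le_abs k; have := le_abs_self N; omega)
    · have key : ∀ k : ℤ, -|N| ≤ k → k < i → y k = 0 := by
        intro k hk
        induction k, hk using Int.le_induction with
        | base => intro _; exact hN _ (by rw [abs_neg, abs_abs]; exact le_abs_self N)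
        | succ k hk ih =>
          intro hki
          have := hy' k
          rw [hne _ (by omega), ih (by omega), map_zero, zero_sub, neg_eq_zero] at this
          exact this
      intro k hk
      by_cases hkN : -|N| ≤ k
      · exact key k hkN hk
      · exact hN k (by have := neg_le_abs k; have := le_abs_self N; omega)
  have hyi : y i = - x := by
    obtain ⟨j, rfl⟩ : ∃ j, i = j + 1 := ⟨i - 1, by omega⟩
    have := hy' j
    rw [hlow j (by omega), map_zero, zero_sub] at this
    have h2 : DirectSum.lof R ℤ E.B (j + 1) x (j + 1) = x := DirectSum.of_eq_same (j + 1) x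
    rw [h2] at this
    rw [← this, neg_neg]
  have hup : ∀ m : ℕ, ∀ k : ℤ, i ≤ k → N ≤ k + m → y k = 0 := by
    intro m
    induction m with
    | zero => intro k _ hk; exact hN k (by have := le_abs_self k; push_cast at hk; omega)
    | succ m ih =>
      intro k hik hk
      have := hy' k
      rw [hne _ (by omega), ih (k + 1) (by omega) (by push_cast at hk; omega), sub_zero] at this
      exact hβ k (by rw [this, map_zero])
  have := hup (N - i).toNat i le_rfl (by omega)
  rw [hyi, neg_eq_zero] at this
  exact this

theorem eps_injective_iff (E : EndoModule R) {H : Type u} [AddCommGroup H] [Module R H]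
    (h : ∀ i, E.B i →ₗ[R] H) (hc : IsCocone E h) (i : ℤ) :
    Function.Injective (E.eps h hc i) ↔
      ∀ x, h (i + 1) x ∈ LinearMap.range (h i) → x ∈ LinearMap.range (E.β i) := by
  rw [injective_iff_map_eq_zero]
  constructor
  · intro H1 x hx
    rw [← Submodule.Quotient.mk_eq_zero]
    apply H1
    exact (Submodule.Quotient.mk_eq_zero _).2 hx
  · intro H1 a ha
    obtain ⟨x, rfl⟩ := Submodule.Quotient.mk_surjective _ a
    rw [Submodule.Quotient.mk_eq_zero]
    exact H1 x ((Submodule.Quotient.mk_eq_zero _).1 ha)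

theorem range_eps (E : EndoModule R) {H : Type u} [AddCommGroup H] [Module R H]
    (h : ∀ i, E.B i →ₗ[R] H) (hc : IsCocone E h) (i : ℤ) :
    LinearMap.range (E.eps h hc i) =
      Submodule.map (LinearMap.range (h i)).mkQ (LinearMap.range (h (i + 1))) := by
  ext a
  constructor
  · rintro ⟨b, rfl⟩
    obtain ⟨x, rfl⟩ := Submodule.Quotient.mk_surjective _ b
    exact ⟨h (i + 1) x, ⟨x, rfl⟩, rfl⟩
  · rintro ⟨_, ⟨x, rfl⟩, rfl⟩
    exact ⟨Submodule.Quotient.mk x, rfl⟩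

/-- Let `(B, β)` be an endo-module over a commutative ring `R` and let
`(H, h)` be the colimit of the system. If `(B, β)` is degenerate (all `β i` injective),
then the canonical surjection `ε (i+1) : C (i+1) → H_(i+1/i)` is an isomorphism for every
`i` (injective, with range the image of `H_(i+1)` in `H/H_(i)`). Conversely, if `(B, β)`
is bounded below and every `ε (i+1)` is an isomorphism, then `(B, β)` is degenerate. -/
theorem degenerate_iff_eps_iso
    {R : Type u} [CommRing R] (E : EndoModule R)
    {H : Type u} [AddCommGroup H] [Module R H]
    (h : ∀ i, E.B i →ₗ[R] H) (hcol : IsColimit E h) :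
    ((∀ i : ℤ, Function.Injective (E.β i)) →
      ∀ i : ℤ, Function.Injective (E.eps h hcol.1 i) ∧
        LinearMap.range (E.eps h hcol.1 i) =
          Submodule.map (LinearMap.range (h i)).mkQ (LinearMap.range (h (i + 1)))) ∧
    ((∃ n : ℤ, ∀ i : ℤ, i < n → ∀ x : E.B i, x = 0) →
      (∀ i : ℤ, Function.Injective (E.eps h hcol.1 i) ∧
        LinearMap.range (E.eps h hcol.1 i) =
          Submodule.map (LinearMap.range (h i)).mkQ (LinearMap.range (h (i + 1)))) →
      ∀ i : ℤ, Function.Injective (E.β i)) := by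
  constructor
  · intro hβ i
    refine ⟨(eps_injective_iff E h hcol.1 i).2 ?_, range_eps E h hcol.1 i⟩
    rintro x ⟨y, hy⟩
    refine ⟨y, colimit_injective E h hcol hβ (i + 1) ?_⟩
    rw [hcol.1 i y, hy]
  · rintro ⟨n, hn⟩ heps
    have step : ∀ i, Function.Injective (h i) → Function.Injective (h (i + 1)) := by
      intro i hi
      rw [injective_iff_map_eq_zero]
      intro x hx
      obtain ⟨y, rfl⟩ := (eps_injective_iff E h hcol.1 i).1 (heps i).1 x
        (by rw [hx]; exact zero_mem _)
      rw [hcol.1 i y] at hx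
      rw [(injective_iff_map_eq_zero (h i)).1 hi y hx, map_zero]
    have low : ∀ i, i < n → Function.Injective (h i) := by
      intro i hi x y _
      rw [hn i hi x, hn i hi y]
    have all : ∀ i, Function.Injective (h i) := by
      intro i
      by_cases hi : i < n
      · exact low i hi
      · have hi' : n - 1 ≤ i := by omega
        clear hi
        induction i, hi' using Int.le_induction with
        | base => exact low _ (by omega)
        | succ k hk ih => exact step k ih
    intro i x y hxy
    apply all i
    rw [← hcol.1 i x, ← hcol.1 i y, hxy]

end EndoModule
end

section
/- Let p be an odd prime and s a positive integer divisible by p − 1. Then: (i) for every integer k > 1 not divisible by p, the p-adic valuation satisfies v_p(k^s − 1) ≥ v_p(s) + 1; and (ii) there exists an integer k > 1 not divisible by p such that v_p(k^s − 1) = v_p(s) + 1. -/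
/-- Let `p` be an odd prime and `s` a positive integer divisible by
`p - 1`. Then: (i) for every integer `k > 1` not divisible by `p`, the `p`-adic valuation
satisfies `v_p (k ^ s - 1) ≥ v_p s + 1`; and (ii) there exists an integer `k > 1` not
divisible by `p` with `v_p (k ^ s - 1) = v_p s + 1`. -/
theorem padicValNat_pow_sub_one_of_sub_one_dvd
    (p : ℕ) (hp : p.Prime) (hodd : Odd p) (s : ℕ) (hs : 0 < s) (hdvd : (p - 1) ∣ s) :
    (∀ k : ℕ, 1 < k → ¬ p ∣ k →
      padicValNat p s + 1 ≤ padicValNat p (k ^ s - 1)) ∧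
    (∃ k : ℕ, 1 < k ∧ ¬ p ∣ k ∧
      padicValNat p (k ^ s - 1) = padicValNat p s + 1) := by
  haveI : Fact p.Prime := ⟨hp⟩
  have h2 := hp.two_le
  refine ⟨?_, p + 1, by omega, ?_, ?_⟩
  · intro k hk hpk
    obtain ⟨t, rfl⟩ := hdvd
    have ht : t ≠ 0 := by
      rintro rfl
      simp at hs
    have hp1 : p - 1 ≠ 0 := by omega
    have hlt : 1 < k ^ (p - 1) := Nat.one_lt_pow hp1 hk
    have hcop : Nat.Coprime k p := ((Nat.Prime.coprime_iff_not_dvd hp).2 hpk).symm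
    have hfer : p ∣ k ^ (p - 1) - 1 := by
      have h := Nat.ModEq.pow_totient hcop
      rw [Nat.totient_prime hp] at h
      exact (Nat.modEq_iff_dvd' hlt.le).1 h.symm
    have hnd : ¬ p ∣ k ^ (p - 1) := fun h => hpk (hp.dvd_of_dvd_pow h)
    have key := padicValNat.pow_sub_pow (p := p) hodd hlt hfer hnd ht
    rw [one_pow, ← pow_mul] at key
    have hv : padicValNat p (p - 1) = 0 :=
      padicValNat.eq_zero_of_not_dvd (Nat.not_dvd_of_pos_of_lt (by omega) (by omega))
    have h1 : 1 ≤ padicValNat p (k ^ (p - 1) - 1) :=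
      one_le_padicValNat_of_dvd (by omega) hfer
    rw [key, padicValNat.mul hp1 ht, hv]
    omega
  · intro h
    have := (Nat.dvd_add_right (dvd_refl p)).1 h
    exact hp.one_lt.ne' (Nat.dvd_one.1 this)
  · have hnd : ¬ p ∣ p + 1 := by
      intro h
      have := (Nat.dvd_add_right (dvd_refl p)).1 h
      exact hp.one_lt.ne' (Nat.dvd_one.1 this)
    have key := padicValNat.pow_sub_pow (p := p) hodd (x := p + 1) (y := 1) (by omega)
      (by simp) hnd hs.ne'
    rw [one_pow, Nat.add_sub_cancel, padicValNat_self] at key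
    rw [key, add_comm]
end

section
/- Let i be a nonnegative integer. For each integer k > 1 set r_k = k · ∏_{j=1}^{i} (k^j − 1). Then the elements r_k, for all integers k > 1, generate the unit ideal of the ring ℤ[1/(i+1)!]. Equivalently, for every prime p > i + 1 there exists an integer k > 1 such that p does not divide k · ∏_{j=1}^{i} (k^j − 1). -/
theorem exists_k_aux (i p : ℕ) (hp : p.Prime) (hip : i + 1 < p) :
    ∃ k : ℕ, 1 < k ∧
      ¬ ((p : ℤ) ∣ (k : ℤ) * ∏ j ∈ Finset.Icc 1 i, ((k : ℤ) ^ j - 1)) := by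
  haveI : Fact p.Prime := ⟨hp⟩
  obtain ⟨g, hg⟩ := IsCyclic.exists_generator (α := (ZMod p)ˣ)
  have hord : orderOf g = p - 1 := by
    rw [orderOf_eq_card_of_forall_mem_zpowers hg, Nat.card_eq_fintype_card, ZMod.card_units]
  refine ⟨(g : ZMod p).val + p, by have := hp.two_le; omega, ?_⟩
  have hk : ((((g : ZMod p).val + p : ℕ) : ℤ) : ZMod p) = (g : ZMod p) := by
    simp
  intro h
  rcases (Nat.prime_iff_prime_int.mp hp).dvd_or_dvd h with h | h
  · rw [← ZMod.intCast_zmod_eq_zero_iff_dvd, hk] at h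
    exact g.ne_zero h
  · obtain ⟨j, hj, h⟩ := (Prime.dvd_finset_prod_iff (Nat.prime_iff_prime_int.mp hp) _).mp h
    rw [← ZMod.intCast_zmod_eq_zero_iff_dvd, Int.cast_sub, Int.cast_pow, hk, Int.cast_one,
      sub_eq_zero] at h
    have h1 : g ^ j = 1 := by
      ext
      simpa using h
    have h2 := orderOf_dvd_of_pow_eq_one h1
    rw [Finset.mem_Icc] at hj
    have h3 := Nat.le_of_dvd (by omega) h2
    omega

/-- Let `i ≥ 0`. For each integer `k > 1` set
`r_k = k * ∏_{j=1}^{i} (k^j - 1)`. The elements `r_k`, for all integers `k > 1`, generate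
the unit ideal of `ℤ[1/(i+1)!]`. Equivalently, for every prime `p > i + 1` there exists an
integer `k > 1` such that `p` does not divide `k * ∏_{j=1}^{i} (k^j - 1)`. -/
theorem r_k_generate_unit_ideal
    (i : ℕ) :
    Ideal.span {x : Localization.Away ((Nat.factorial (i + 1) : ℤ)) |
        ∃ k : ℕ, 1 < k ∧
          x = algebraMap ℤ (Localization.Away ((Nat.factorial (i + 1) : ℤ)))
            ((k : ℤ) * ∏ j ∈ Finset.Icc 1 i, ((k : ℤ) ^ j - 1))} = ⊤ ∧
    ∀ p : ℕ, p.Prime → i + 1 < p →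
      ∃ k : ℕ, 1 < k ∧
        ¬ ((p : ℤ) ∣ (k : ℤ) * ∏ j ∈ Finset.Icc 1 i, ((k : ℤ) ^ j - 1)) := by
  refine ⟨?_, exists_k_aux i⟩
  by_contra hne
  obtain ⟨M, hM, hle⟩ := Ideal.exists_le_maximal _ hne
  have hMp := hM.isPrime
  set f := algebraMap ℤ (Localization.Away ((Nat.factorial (i + 1) : ℤ))) with hf
  have hP : (M.comap f).IsPrime := Ideal.comap_isPrime f M
  have hmem : ∀ k : ℕ, 1 < k →
      ((k : ℤ) * ∏ j ∈ Finset.Icc 1 i, ((k : ℤ) ^ j - 1)) ∈ M.comap f := fun k hk =>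
    hle (Ideal.subset_span ⟨k, hk, rfl⟩)
  have hfac : ((Nat.factorial (i + 1) : ℕ) : ℤ) ∉ M.comap f := fun h =>
    hMp.ne_top (Ideal.eq_top_of_isUnit_mem _ h
      (IsLocalization.Away.algebraMap_isUnit ((Nat.factorial (i + 1) : ℤ))))
  have hne0 : M.comap f ≠ ⊥ := by
    intro h0
    obtain ⟨q, hq, hqp⟩ := Nat.exists_infinite_primes (i + 2)
    obtain ⟨k, hk, hnd⟩ := exists_k_aux i q hqp (by omega)
    have := hmem k hk
    rw [h0, Ideal.mem_bot] at this
    rw [this] at hnd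
    exact hnd (dvd_zero _)
  have hgp := Submodule.IsPrincipal.prime_generator_of_isPrime (M.comap f) hne0
  set n := Submodule.IsPrincipal.generator (M.comap f) with hn
  have hnp : n.natAbs.Prime := Int.prime_iff_natAbs_prime.mp hgp
  have hmm : ∀ x : ℤ, x ∈ M.comap f ↔ (n.natAbs : ℤ) ∣ x := fun x => by
    rw [Int.natAbs_dvd]
    exact Submodule.IsPrincipal.mem_iff_generator_dvd (M.comap f)
  have hlt : i + 1 < n.natAbs := by
    by_contra hcon
    apply hfac
    rw [hmm, Int.natCast_dvd_natCast]
    exact hnp.dvd_factorial.mpr (by omega)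
  obtain ⟨k, hk, hnd⟩ := exists_k_aux i _ hnp hlt
  exact hnd ((hmm _).mp (hmem k hk))
end
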